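/- arXiv:math-ph/0304015 — 2 statements merged into one kernel-verified Lean document; each statement's English description precedes it below -/
import Mathlib

section
/- Let V = (Fin K → ℂ) × (Fin K → ℂ) with the symplectic form ω((x,ξ),(x',ξ')) = Σᵢ ξ'ᵢxᵢ − Σᵢ ξᵢx'ᵢ and entrywise complex conjugation X ↦ X̄. Let L ⊆ V be a Lagrangian subspace. Then the following are equivalent: (a) for every nonzero X ∈ L, the imaginary part of ω(X̄, X) is strictly positive; (b) there exists a complex symmetric K×K matrix Q whose imaginary part Im Q is a positive definite real matrix, such that L = L_Q = {(f, Q·f) : f : Fin K → ℂ}. (This identifies the Siegel domain S₊ ⊆ 𝕃 with the Siegel upper half-plane of symmetric matrices with positive definite imaginary part.) -/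
/-!
For `X = (x, ξ)` one has `Im ω(X̄, X) = 2 Im Σᵢ x̄ᵢ ξᵢ`, so a positive `L` contains no nonzero
`(0, ξ)`. Hence the projection of `L` to the first factor is injective. It is also surjective: a
functional `v` vanishing on its range gives `(0, v) ∈ L° = L`, so `v = 0`. Thus `L` is the graph
of a matrix `Q`, and isotropy of `L` says that `Q` is symmetric. For symmetric `Q` and
`f = a + i b`, the cross terms cancel and `Im ω(X̄, X) = 2 (aᵀ (Im Q) a + bᵀ (Im Q) b)` for
`X = (f, Q f)` (`im_omegaV_conjV_graph`), which gives both the positivity of `Im Q` and the converse.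
-/

open Matrix

noncomputable section

/-- `V = ℂ^K × (ℂ^K)^*`. -/
abbrev VK (K : ℕ) : Type := (Fin K → ℂ) × (Fin K → ℂ)

/-- The canonical symplectic form `ω((x,ξ),(x',ξ')) = Σᵢ ξ'ᵢ xᵢ − Σᵢ ξᵢ x'ᵢ`. -/
def omegaV {K : ℕ} : VK K →ₗ[ℂ] VK K →ₗ[ℂ] ℂ :=
  LinearMap.mk₂ ℂ (fun v w => ∑ i, w.2 i * v.1 i - ∑ i, v.2 i * w.1 i)
    (by
      intro m₁ m₂ n
      simp only [Prod.fst_add, Prod.snd_add, Pi.add_apply, mul_add, add_mul,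
        Finset.sum_add_distrib]
      ring)
    (by
      intro c m n
      simp only [Prod.smul_fst, Prod.smul_snd, Pi.smul_apply, smul_eq_mul, mul_sub,
        Finset.mul_sum, mul_comm, mul_left_comm, mul_assoc])
    (by
      intro m n₁ n₂
      simp only [Prod.fst_add, Prod.snd_add, Pi.add_apply, mul_add, add_mul,
        Finset.sum_add_distrib]
      ring)
    (by
      intro m c n
      simp only [Prod.smul_fst, Prod.smul_snd, Pi.smul_apply, smul_eq_mul, mul_sub,
        Finset.mul_sum, mul_comm, mul_left_comm, mul_assoc])

/-- Entrywise complex conjugation on `V`. -/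
def conjV {K : ℕ} (v : VK K) : VK K :=
  (fun i => starRingEnd ℂ (v.1 i), fun i => starRingEnd ℂ (v.2 i))

/-- The `ω`-orthogonal of a subspace `U`. -/
def sympOrth {V : Type*} [AddCommGroup V] [Module ℂ V]
    (ω : V →ₗ[ℂ] V →ₗ[ℂ] ℂ) (U : Submodule ℂ V) : Submodule ℂ V where
  carrier := {v | ∀ u ∈ U, ω v u = 0}
  add_mem' := by
    intro a b ha hb u hu
    simp [map_add, LinearMap.add_apply, ha u hu, hb u hu]
  zero_mem' := by
    intro u hu
    simp
  smul_mem' := by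
    intro c a ha u hu
    simp [_root_.map_smul, LinearMap.smul_apply, ha u hu]

lemma omegaV_apply {K : ℕ} (v w : VK K) :
    omegaV v w = ∑ i, w.2 i * v.1 i - ∑ i, v.2 i * w.1 i := rfl

lemma im_omegaV_conjV {K : ℕ} (v : VK K) :
    (omegaV (conjV v) v).im = 2 * ∑ i, ((v.1 i).re * (v.2 i).im - (v.1 i).im * (v.2 i).re) := by
  rw [omegaV_apply, ← Finset.sum_sub_distrib, Complex.im_sum, Finset.mul_sum]
  refine Finset.sum_congr rfl fun i _ => ?_
  simp [conjV]
  ring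

/-- On the graph of a symmetric matrix, the Hermitian form is twice the real quadratic form
of `Im Q` evaluated on the real and imaginary parts of the base vector. -/
lemma im_omegaV_conjV_graph {K : ℕ} (Q : Matrix (Fin K) (Fin K) ℂ) (hQ : Q.IsSymm)
    (f : Fin K → ℂ) :
    (omegaV (conjV ((f, Q *ᵥ f) : VK K)) (f, Q *ᵥ f)).im =
      2 * ((fun i => (f i).re) ⬝ᵥ (Q.map Complex.im *ᵥ fun i => (f i).re) +
        (fun i => (f i).im) ⬝ᵥ (Q.map Complex.im *ᵥ fun i => (f i).im)) := by
  rw [im_omegaV_conjV]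
  have hanti : ∑ i, ∑ j, (Q i j).re * ((f i).re * (f j).im) =
      ∑ i, ∑ j, (Q i j).re * ((f i).im * (f j).re) := by
    rw [Finset.sum_comm]
    refine Finset.sum_congr rfl fun i _ => Finset.sum_congr rfl fun j _ => ?_
    rw [hQ.apply i j]
    ring
  congr 1
  rw [← sub_eq_zero] at hanti ⊢
  rw [← hanti]
  simp only [mulVec, dotProduct, Complex.re_sum, Complex.im_sum, Finset.mul_sum,
    ← Finset.sum_sub_distrib, ← Finset.sum_add_distrib, Matrix.map_apply]
  refine Finset.sum_congr rfl fun i _ => Finset.sum_congr rfl fun j _ => ?_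
  simp only [Complex.mul_re, Complex.mul_im]
  ring

/-- A positive Lagrangian subspace is transverse to `0 × ℂ^K`, hence is a graph. -/
lemma exists_graph {K : ℕ} (L : Submodule ℂ (VK K)) (hLlag : sympOrth omegaV L = L)
    (hpos : ∀ X ∈ L, X ≠ 0 → 0 < (omegaV (conjV X) X).im) :
    ∃ Q : Matrix (Fin K) (Fin K) ℂ,
      (L : Set (VK K)) = {v : VK K | ∃ f : Fin K → ℂ, v = (f, Q *ᵥ f)} := by
  have hvert : ∀ X ∈ L, X.1 = 0 → X = 0 := by
    intro X hX h1
    by_contra hne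
    have := hpos X hX hne
    simp [im_omegaV_conjV, h1] at this
  set p : L →ₗ[ℂ] (Fin K → ℂ) := (LinearMap.fst ℂ _ _).comp L.subtype with hp
  have hinj : Function.Injective p := by
    rw [injective_iff_map_eq_zero]
    rintro ⟨X, hX⟩ h
    exact Subtype.ext (hvert X hX h)
  have hsurj : Function.Surjective p := by
    rw [← LinearMap.range_eq_top]
    by_contra hne
    obtain ⟨φ, hφ, hle⟩ := Submodule.exists_le_ker_of_lt_top _ (lt_top_iff_ne_top.2 hne)
    have hφapp : ∀ x, φ x = ∑ i, φ (Pi.single i 1) * x i := by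
      intro x
      conv_lhs => rw [pi_eq_sum_univ' x]
      simp [mul_comm]
    -- The functional `φ`, viewed as the vertical vector `(0, φ)`, is `ω`-orthogonal to `L`.
    have hmem : ((0, fun i => φ (Pi.single i 1)) : VK K) ∈ L := by
      rw [← hLlag]
      intro u hu
      have h0 : φ u.1 = 0 := hle ⟨⟨u, hu⟩, rfl⟩
      rw [hφapp] at h0
      simp [omegaV_apply, h0]
    have hz := congrArg Prod.snd (hvert _ hmem rfl)
    apply hφ
    ext i
    simpa using congrFun hz i
  let e := LinearEquiv.ofBijective p ⟨hinj, hsurj⟩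
  refine ⟨LinearMap.toMatrix' ((LinearMap.snd ℂ _ _).comp (L.subtype.comp e.symm.toLinearMap)), ?_⟩
  have he : ∀ f, ((e.symm f : L) : VK K).1 = f := fun f => e.apply_symm_apply f
  ext v
  simp only [SetLike.mem_coe, Set.mem_ofPred_eq, LinearMap.toMatrix'_mulVec]
  constructor
  · intro hv
    refine ⟨v.1, Prod.ext rfl ?_⟩
    have : e.symm v.1 = ⟨v, hv⟩ := e.symm_apply_apply ⟨v, hv⟩
    simp [this]
  · rintro ⟨f, rfl⟩
    convert (e.symm f).2 using 1
    exact Prod.ext (he f).symm rfl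

/-- A Lagrangian subspace `L` of `V = ℂ^K ⊕ (ℂ^K)^*` satisfies `Im ω(X̄, X) > 0` for all
nonzero `X ∈ L` iff `L = L_Q = {(f, Q·f)}` for a complex symmetric matrix `Q` whose imaginary
part is positive definite: the Siegel domain `S₊ ⊆ 𝕃` is the Siegel upper half-plane. -/
theorem statement_10 {K : ℕ} (L : Submodule ℂ (VK K))
    (hLlag : sympOrth omegaV L = L) :
    (∀ X ∈ L, X ≠ 0 → 0 < (omegaV (conjV X) X).im) ↔
      ∃ Q : Matrix (Fin K) (Fin K) ℂ, Q.IsSymm ∧ (Q.map Complex.im).PosDef ∧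
        (L : Set (VK K)) = {v : VK K | ∃ f : Fin K → ℂ, v = (f, Q *ᵥ f)} := by
  constructor
  · intro hpos
    obtain ⟨Q, hQ⟩ := exists_graph L hLlag hpos
    have hmem : ∀ f : Fin K → ℂ, ((f, Q *ᵥ f) : VK K) ∈ L := fun f => by
      rw [← SetLike.mem_coe, hQ]
      exact ⟨f, rfl⟩
    have hsymm : Q.IsSymm := by
      refine IsSymm.ext fun i j => ?_
      have h : ((Pi.single i 1, Q *ᵥ Pi.single i 1) : VK K) ∈ sympOrth omegaV L :=
        hLlag.symm ▸ hmem _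
      have h' := h _ (hmem (Pi.single j 1))
      simp [omegaV_apply, Pi.single_apply] at h'
      linear_combination -h'
    refine ⟨Q, hsymm, ?_, hQ⟩
    refine PosDef.of_dotProduct_mulVec_pos ?_ fun x hx => ?_
    · ext i j
      simp [hsymm.apply i j]
    · have h := hpos _ (hmem fun i => (x i : ℂ)) (fun h0 => hx (by
        ext i
        simpa using congrFun (congrArg Prod.fst h0) i))
      rw [im_omegaV_conjV_graph Q hsymm] at h
      have hz : (fun _ : Fin K => (0 : ℝ)) = 0 := rfl
      simpa [hz] using h
  · rintro ⟨Q, hsymm, hpd, hQ⟩ X hX hne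
    rw [← SetLike.mem_coe, hQ] at hX
    obtain ⟨f, rfl⟩ := hX
    rw [im_omegaV_conjV_graph Q hsymm]
    have hnn : ∀ x : Fin K → ℝ, 0 ≤ x ⬝ᵥ (Q.map Complex.im *ᵥ x) := fun x => by
      simpa using hpd.posSemidef.dotProduct_mulVec_nonneg x
    have hp : ∀ x : Fin K → ℝ, x ≠ 0 → 0 < x ⬝ᵥ (Q.map Complex.im *ᵥ x) := fun x hx => by
      simpa using hpd.dotProduct_mulVec_pos hx
    have ha := hnn fun i => (f i).re
    have hb := hnn fun i => (f i).im
    by_cases hre : (fun i => (f i).re) = 0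
    · have him : (fun i => (f i).im) ≠ 0 := by
        intro him
        apply hne
        have hf : f = 0 := by
          ext i
          exact Complex.ext (congrFun hre i) (congrFun him i)
        simp [hf]
      linarith [hp _ him]
    · linarith [hp _ hre]
end
end

section
/- Let F be a finite type, ∂F ⊆ F, Q a real symmetric matrix indexed by F, b : F → ℝ strictly positive, and B = diag(b). For λ₀ ∈ ℂ, the minimum, over all pairs of subsets S, T ⊆ ∂F with |S| = |T| (including the empty pair), of the order of vanishing at λ₀ of the polynomial λ ↦ det( (Q + λB) restricted to rows (F∖∂F) ∪ S and columns (F∖∂F) ∪ T ) equals dim{f : F → ℂ : (Q + λ₀B)·f = 0 and f|_{∂F} = 0}, the dimension of the Neumann–Dirichlet kernel of Q + λ₀B. (These minors are the components of R_{F→∂F}(exp η̄(Q+λB)η), so this is the identity between the order of vanishing of the lifted symplectic reduction along the spectral curve and the Neumann–Dirichlet multiplicity.) -/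
/-!
Write `A = Q + λ₀ B` and let `K` be the space of null vectors of `A` vanishing on `∂F`. Every minor
is the determinant of a pencil `A' + (X - λ₀) B'`, where `A'` and `B'` are submatrices of `A` and
`B`, and such a determinant vanishes at `λ₀` to order at least `dim ker A'` (`pencil_det_factor`).
All the column sets contain `F ∖ ∂F`, so `K` embeds in `ker A'` (`vanishing_kernel_le`), and every
order is at least `dim K`.

The minimum is attained by a principal minor. Choose `S ⊆ ∂F` so that the columns of `A` in `S` form
a basis modulo the span of the columns in `F ∖ ∂F`. Symmetry of `A` then makes the kernel of the
principal submatrix on `(F ∖ ∂F) ∪ S` no larger than `K` (`exists_principal_kernel_le`). As the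
submatrix belongs to a real symmetric pencil with positive definite `B`, the order of vanishing of
its determinant is exactly the dimension of its kernel (`real_pencil_nondegenerate`).
-/

open Matrix Polynomial

noncomputable section

/-- Functions vanishing on `s`. -/
def vanishOn {F : Type*} (s : Set F) : Submodule ℂ (F → ℂ) where
  carrier := {f | ∀ x ∈ s, f x = 0}
  add_mem' := by intro a b ha hb x hx; simp [ha x hx, hb x hx]
  zero_mem' := by intro x hx; simp
  smul_mem' := by intro t f hf x hx; simp [hf x hx]

/-- Order of vanishing of a polynomial at a point (`⊤` for the zero polynomial). -/
def ordAt (z : ℂ) (p : Polynomial ℂ) : ℕ∞ :=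
  if p = 0 then ⊤ else (p.rootMultiplicity z : ℕ∞)

lemma sumElim_val_injective {F ι : Type*} (s : Set F) (g : ι → {x // x ∈ s})
    (hg : Function.Injective g) :
    Function.Injective (Sum.elim Subtype.val (fun y => (g y).val) : ({x // x ∉ s} ⊕ ι) → F) :=
  Subtype.val_injective.sumElim (Subtype.val_injective.comp hg)
    fun x y h => x.2 (h ▸ (g y).2)

/-- The order of `det (A + (X - z) B)` at `z` is at least `dim ker A`, with equality when
`B` induces an injection from `ker A` to the cokernel of `A`. In a basis whose first `dim ker A`
members span `ker A`, the corresponding columns are `(X - z) B w`; taking `X - z` out of each of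
them leaves the cofactor `p`, whose value at `z` is, up to a nonzero scalar, the determinant with
columns `B w` (`w` in the basis of `ker A`) and `A u` (`u` in the basis of a complement). -/
lemma pencil_det_factor {n : Type*} [Fintype n] [DecidableEq n] (A B : Matrix n n ℂ) (z : ℂ) :
    ∃ p : ℂ[X],
      (A.map C + (X - C z) • B.map C).det
          = (X - C z) ^ Module.finrank ℂ (LinearMap.ker A.mulVecLin) * p ∧
        ((∀ u w : n → ℂ, A *ᵥ w = 0 → A *ᵥ u + B *ᵥ w = 0 → w = 0) → p.eval z ≠ 0) := by
  obtain ⟨V, hV⟩ := Submodule.exists_isCompl (LinearMap.ker A.mulVecLin)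
  let bas₀ := ((Module.finBasis ℂ (LinearMap.ker A.mulVecLin)).prod (Module.finBasis ℂ V)).map
    (Submodule.prodEquivOfIsCompl _ V hV)
  have hcard := (Module.finrank_eq_card_basis bas₀).symm.trans
    (Module.finrank_eq_card_basis (Pi.basisFun ℂ n))
  let e := Fintype.equivOfCardEq hcard
  let bas := bas₀.reindex e
  -- `t j` says that the `j`-th basis vector lies in `ker A`; otherwise it lies in `V`.
  let t : n → Prop := fun j => (e.symm j).isLeft
  have hker : ∀ j, t j → A *ᵥ bas j = 0 := by
    intro j hj
    obtain ⟨k, hk⟩ := Sum.isLeft_iff.1 hj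
    have : bas j ∈ LinearMap.ker A.mulVecLin := by
      simp [bas, bas₀, hk, -LinearMap.mem_ker]
    simpa using this
  have hcompl : ∀ j, ¬ t j → bas j ∈ V := by
    intro j hj
    obtain ⟨k, hk⟩ := Sum.isRight_iff.1 (by simpa [t] using hj)
    simp [bas, bas₀, hk]
  let U : Matrix n n ℂ := of fun i j => bas j i
  have hU : U.det ≠ 0 := by
    have h : LinearIndependent ℂ U.col := bas.linearIndependent
    exact ((Matrix.isUnit_iff_isUnit_det U).1
      (Matrix.linearIndependent_cols_iff_isUnit.1 h)).ne_zero
  -- `R` is the pencil in the new basis, with the factor `X - z` removed from the columns in `t`.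
  let R : Matrix n n ℂ[X] := of fun i j =>
    if t j then C ((B *ᵥ bas j) i)
    else C ((A *ᵥ bas j) i) + (X - C z) * C ((B *ᵥ bas j) i)
  let D : n → ℂ[X] := fun j => if t j then X - C z else 1
  have hmul : (A.map C + (X - C z) • B.map C) * U.map C = R * diagonal D := by
    have h1 : ∀ (M : Matrix n n ℂ) i j, (M.map C * U.map C) i j = C ((M *ᵥ bas j) i) := by
      intro M i j
      simp [Matrix.mul_apply, mulVec, dotProduct, U]
    ext1 i j
    rw [Matrix.add_mul, Matrix.smul_mul, Matrix.add_apply, Matrix.smul_apply, h1, h1,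
      mul_diagonal, smul_eq_mul]
    by_cases hj : t j
    · simp [R, D, hj, hker j hj, mul_comm]
    · simp [R, D, hj]
  have hD : ∏ j, D j = (X - C z) ^ Module.finrank ℂ (LinearMap.ker A.mulVecLin) := by
    rw [← Equiv.prod_comp e]
    simp [D, t]
  have hdet := congrArg Matrix.det hmul
  rw [det_mul, det_mul, det_diagonal, hD] at hdet
  have hUC : (U.map C).det = (C U.det : ℂ[X]) := ((C : ℂ →+* ℂ[X]).map_det U).symm
  rw [hUC] at hdet
  refine ⟨R.det * C (U.det)⁻¹, ?_, ?_⟩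
  · have h1 : (C U.det : ℂ[X]) * C (U.det)⁻¹ = 1 := by
      rw [← C_mul, mul_inv_cancel₀ hU, C_1]
    linear_combination (C (U.det)⁻¹) * hdet
      - (A.map C + (X - C z) • B.map C).det * h1
  · intro hnd
    rw [eval_mul, eval_C]
    refine mul_ne_zero ?_ (inv_ne_zero hU)
    intro h0
    have h1 : (R.map (evalRingHom z)).det = 0 := by
      rw [← h0]; exact ((evalRingHom z).map_det R).symm
    obtain ⟨v, hv0, hv⟩ := Matrix.exists_mulVec_eq_zero_iff.2 h1
    -- Split a null vector of `R(z)` into its components in `ker A` and in the complement `V`.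
    let w : n → ℂ := ∑ j, if t j then v j • bas j else 0
    let u : n → ℂ := ∑ j, if t j then 0 else v j • bas j
    have hAw : A *ᵥ w = 0 := by
      change A.mulVecLin w = 0
      rw [map_sum]
      refine Finset.sum_eq_zero fun j _ => ?_
      by_cases hj : t j
      · simp [hj, hker j hj]
      · simp [hj]
    have huV : u ∈ V := by
      refine Submodule.sum_mem _ fun j _ => ?_
      by_cases hj : t j
      · simp [hj]
      · simpa [hj] using V.smul_mem _ (hcompl j hj)
    have hAB : A *ᵥ u + B *ᵥ w = 0 := by
      rw [← hv]
      change A.mulVecLin u + B.mulVecLin w = _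
      rw [map_sum, map_sum, ← Finset.sum_add_distrib]
      ext i
      rw [Finset.sum_apply, mulVec, dotProduct]
      refine Finset.sum_congr rfl fun j _ => ?_
      by_cases hj : t j
      · simp [hj, R, mul_comm]
      · simp [hj, R, mul_comm]
    have hw : w = 0 := hnd u w hAw hAB
    have hu : u = 0 := by
      refine Submodule.disjoint_def.1 hV.disjoint u ?_ huV
      simpa [hw] using hAB
    have hsum : ∑ j, v j • bas j = 0 := by
      have hwu : w + u = 0 := by rw [hw, hu, add_zero]
      rw [← hwu, ← Finset.sum_add_distrib]
      refine Finset.sum_congr rfl fun j _ => ?_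
      by_cases hj : t j <;> simp [hj]
    exact hv0 (funext (Fintype.linearIndependent_iff.1 bas.linearIndependent v hsum))

/-- For a real symmetric pencil with positive definite diagonal part, the nondegeneracy condition
of `pencil_det_factor` holds at every `z`. A nonzero `w` in the kernel at `z` forces `z` to be real,
since `w* Q w` and `w* B w ≠ 0` are; the matrix at `z` is then Hermitian, and pairing the second
equation with `w` gives `w* B w = 0`. -/
lemma real_pencil_nondegenerate {n : Type*} [Fintype n] [DecidableEq n]
    (Q : Matrix n n ℝ) (hQ : Q.IsSymm) (b : n → ℝ) (hb : ∀ x, 0 < b x) (z : ℂ) (u w : n → ℂ)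
    (hw : (Q.map (fun t : ℝ => (t : ℂ))
      + z • (diagonal b).map (fun t : ℝ => (t : ℂ))) *ᵥ w = 0)
    (huw : (Q.map (fun t : ℝ => (t : ℂ))
      + z • (diagonal b).map (fun t : ℝ => (t : ℂ))) *ᵥ u
        + (diagonal b).map (fun t : ℝ => (t : ℂ)) *ᵥ w = 0) : w = 0 := by
  set Qc := Q.map (fun t : ℝ => (t : ℂ)) with hQc
  set Bc := (diagonal b).map (fun t : ℝ => (t : ℂ)) with hBc
  have hQh : Qcᴴ = Qc := by
    ext i j; simp [hQc, hQ.apply i j]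
  have hBh : Bcᴴ = Bc := by
    ext i j; by_cases h : i = j
    · subst h; simp [hBc]
    · simp [hBc, h, Ne.symm h]
  have hBw : star w ⬝ᵥ (Bc *ᵥ w) = ((∑ i, b i * Complex.normSq (w i) : ℝ) : ℂ) := by
    have : Bc = diagonal fun i => (b i : ℂ) := by
      rw [hBc, diagonal_map (by simp)]
    rw [this]
    simp only [dotProduct, mulVec_diagonal, Pi.star_apply]
    push_cast
    refine Finset.sum_congr rfl fun i _ => ?_
    rw [Complex.normSq_eq_conj_mul_self]
    simp only [RCLike.star_def]; ring
  by_contra hne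
  have hpos : 0 < ∑ i, b i * Complex.normSq (w i) := by
    obtain ⟨i, hi⟩ := Function.ne_iff.1 hne
    exact Finset.sum_pos' (fun i _ => mul_nonneg (hb i).le (Complex.normSq_nonneg _))
      ⟨i, Finset.mem_univ _, mul_pos (hb i) (Complex.normSq_pos.2 hi)⟩
  have hherm : ∀ M : Matrix n n ℂ, Mᴴ = M → ∀ x, star w ⬝ᵥ (M *ᵥ x) = star (M *ᵥ w) ⬝ᵥ x := by
    intro M hM x
    rw [star_mulVec, hM, dotProduct_mulVec]
  have hne' : star w ⬝ᵥ (Bc *ᵥ w) ≠ 0 := by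
    rw [hBw]; exact_mod_cast hpos.ne'
  have hQw : Qc *ᵥ w = -(z • (Bc *ᵥ w)) := by
    rw [add_mulVec, smul_mulVec] at hw
    exact eq_neg_of_add_eq_zero_left hw
  have hz : star z = z := by
    have h1 := hherm Qc hQh w
    rw [hQw, star_neg, star_smul, dotProduct_neg, neg_dotProduct, neg_inj, dotProduct_smul,
      smul_dotProduct, ← hherm Bc hBh, smul_eq_mul, smul_eq_mul] at h1
    exact (mul_right_cancel₀ hne' h1).symm
  have hA : (Qc + z • Bc)ᴴ = Qc + z • Bc := by
    rw [conjTranspose_add, conjTranspose_smul, hQh, hBh, hz]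
  have h2 := congrArg (fun x => star w ⬝ᵥ x) huw
  simp only [dotProduct_add, dotProduct_zero] at h2
  rw [hherm _ hA, hw, star_zero, zero_dotProduct, zero_add] at h2
  exact hne' h2

/-- Restriction to the column set embeds the kernel vectors vanishing on `s` into the kernel of any
submatrix whose column set contains the complement of `s`. -/
lemma vanishing_kernel_le {F m : Type*} [Fintype F] [Fintype m] [DecidableEq m] (s : Set F)
    (A : Matrix F F ℂ) (r c : m → F) (hc : Function.Injective c)
    (hcs : ∀ x, x ∉ s → x ∈ Set.range c) :
    Module.finrank ℂ ↥(LinearMap.ker A.mulVecLin ⊓ vanishOn s)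
      ≤ Module.finrank ℂ (LinearMap.ker (A.submatrix r c).mulVecLin) := by
  let φ := LinearMap.funLeft ℂ ℂ c
  have hzero : ∀ f ∈ LinearMap.ker A.mulVecLin ⊓ vanishOn s, ∀ x, x ∉ Set.range c → f x = 0 :=
    fun f hf x hx => hf.2 x (by_contra fun h => hx (hcs x h))
  have hmaps : ∀ f ∈ LinearMap.ker A.mulVecLin ⊓ vanishOn s,
      φ f ∈ LinearMap.ker (A.submatrix r c).mulVecLin := by
    intro f hf
    rw [LinearMap.mem_ker]
    ext i
    have h1 : (A *ᵥ f) (r i) = 0 := congrFun (LinearMap.mem_ker.1 hf.1) (r i)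
    rw [Pi.zero_apply, ← h1]
    simp only [mulVecLin_apply, mulVec, dotProduct, submatrix_apply]
    refine Fintype.sum_of_injective c hc _ _ (fun x hx => ?_) (fun j => rfl)
    rw [hzero f hf x hx, mul_zero]
  refine LinearMap.finrank_le_finrank_of_injective (f := φ.restrict hmaps) ?_
  rw [← LinearMap.ker_eq_bot, LinearMap.ker_eq_bot']
  intro f hf
  ext x
  by_cases hx : x ∈ Set.range c
  · obtain ⟨j, rfl⟩ := hx
    exact congrFun (congrArg Subtype.val hf) j
  · exact hzero f f.2 x hx

/-- Let `S ⊆ s` index a basis of the columns of `A` modulo the span `W` of the columns outside `s`,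
and let `J = sᶜ ∪ S`. The columns in `J`, hence by symmetry the rows in `J`, span all of them, so a
null vector of the principal submatrix on `J` extends by zero to a null vector of `A`; by
independence modulo `W` its entries on `S` are zero. The binder `c` only abbreviates the
inclusion of `J`. -/
lemma exists_principal_kernel_le {F : Type*} [Fintype F] [DecidableEq F] (s : Set F)
    [DecidablePred (· ∈ s)] (A : Matrix F F ℂ) (hA : A.IsSymm) :
    ∃ S : Finset {x // x ∈ s}, ∀ c : ({x // x ∉ s} ⊕ {y // y ∈ S}) → F,
      c = Sum.elim Subtype.val (fun y => y.val.val) →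
      Module.finrank ℂ (LinearMap.ker (A.submatrix c c).mulVecLin)
        ≤ Module.finrank ℂ ↥(LinearMap.ker A.mulVecLin ⊓ vanishOn s) := by
  classical
  let W : Submodule ℂ (F → ℂ) := Submodule.span ℂ (Set.range fun x : {x // x ∉ s} => A.col x)
  let v : {x // x ∈ s} → (F → ℂ) ⧸ W := fun x => W.mkQ (A.col x)
  obtain ⟨S₀, -, -, hspan, hind⟩ := exists_linearIndepOn_extension (K := ℂ) (v := v)
    (linearIndepOn_empty ℂ v) (Set.empty_subset Set.univ)
  refine ⟨S₀.toFinset, ?_⟩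
  rintro c rfl
  set c : ({x // x ∉ s} ⊕ {y // y ∈ S₀.toFinset}) → F :=
    Sum.elim Subtype.val (fun y => y.val.val) with hc
  have hcinj : Function.Injective c := sumElim_val_injective s _ Subtype.val_injective
  have hcols : ∀ x, A.col x ∈ Submodule.span ℂ (Set.range fun j => A.col (c j)) := by
    have hW : W ≤ Submodule.span ℂ (Set.range fun j => A.col (c j)) := by
      refine Submodule.span_mono ?_
      rintro _ ⟨x, rfl⟩
      exact ⟨Sum.inl x, rfl⟩
    intro x
    by_cases hx : x ∈ s
    · have h1 : W.mkQ (A.col x) ∈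
          (Submodule.span ℂ (Set.range fun j => A.col (c j))).map W.mkQ := by
        refine (Submodule.span_le.2 ?_) (hspan ⟨⟨x, hx⟩, Set.mem_univ _, rfl⟩)
        rintro _ ⟨y, hy, rfl⟩
        exact ⟨A.col y, Submodule.subset_span
          ⟨Sum.inr ⟨y, Set.mem_toFinset.2 hy⟩, rfl⟩, rfl⟩
      obtain ⟨y, hy, hyx⟩ := h1
      have h2 : y - A.col x ∈ W := (Submodule.Quotient.eq W).1 hyx
      simpa using Submodule.sub_mem _ hy (hW h2)
    · exact hW (Submodule.subset_span ⟨⟨x, hx⟩, rfl⟩)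
  refine le_trans (Submodule.finrank_mono ?_)
    (Submodule.finrank_map_le (LinearMap.funLeft ℂ ℂ c) _)
  intro g hg
  let f : F → ℂ := Function.extend c g 0
  have hfc : ∀ j, f (c j) = g j := fun j => hcinj.extend_apply g (0 : F → ℂ) j
  have hf0 : ∀ x, x ∉ Set.range c → f x = 0 := fun x hx =>
    Function.extend_apply' g (0 : F → ℂ) x hx
  have hAJ : ∀ j, A.col (c j) ⬝ᵥ f = 0 := by
    intro j
    have h1 : ((A.submatrix c c) *ᵥ g) j = 0 := congrFun (LinearMap.mem_ker.1 hg) j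
    rw [← h1]
    simp only [mulVec, dotProduct, submatrix_apply]
    refine (Fintype.sum_of_injective c hcinj _ _ (fun x hx => ?_) (fun k => ?_)).symm
    · rw [hf0 x hx, mul_zero]
    · rw [hfc, col_apply, hA.apply]
  have hAf : A *ᵥ f = 0 := by
    ext x
    have h1 : Submodule.span ℂ (Set.range fun j => A.col (c j)) ≤
        LinearMap.ker ((dotProductBilin ℂ ℂ).flip f) := by
      rw [Submodule.span_le]
      rintro _ ⟨j, rfl⟩
      exact hAJ j
    have h2 : A.col x ⬝ᵥ f = 0 := h1 (hcols x)
    rw [Pi.zero_apply, ← h2]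
    simp only [mulVec, dotProduct, col_apply, hA.apply]
  have hsum : ∑ y : {y // y ∈ S₀.toFinset}, g (Sum.inr y) • v y.1 = 0 := by
    have h1 : W.mkQ (∑ j, g j • A.col (c j)) = 0 := by
      have : ∑ j, g j • A.col (c j) = A *ᵥ f := by
        ext x
        simp only [Finset.sum_apply, Pi.smul_apply, smul_eq_mul, mulVec, dotProduct, col_apply]
        refine Fintype.sum_of_injective c hcinj _ _ (fun x hx => ?_) (fun k => ?_)
        · rw [hf0 x hx, mul_zero]
        · rw [hfc, mul_comm]
      rw [this, hAf, map_zero]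
    rw [map_sum, Fintype.sum_sum_type, Finset.sum_eq_zero, zero_add] at h1
    · simpa [v, hc] using h1
    · intro x _
      rw [map_smul, show W.mkQ (A.col (c (Sum.inl x))) = 0 from
        (Submodule.Quotient.mk_eq_zero W).2 ?_, smul_zero]
      exact Submodule.subset_span ⟨x, rfl⟩
  have hgS : ∀ y, g (Sum.inr y) = 0 := by
    have h1 : LinearIndependent ℂ fun y : {y // y ∈ S₀.toFinset} => v y.1 :=
      hind.linearIndependent.comp
        (fun y : {y // y ∈ S₀.toFinset} => (⟨y.1, Set.mem_toFinset.1 y.2⟩ : S₀))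
        (fun a b h => Subtype.ext (congrArg (fun t : S₀ => t.1) h))
    exact Fintype.linearIndependent_iff.1 h1 _ hsum
  refine ⟨f, ⟨LinearMap.mem_ker.2 hAf, ?_⟩, funext hfc⟩
  intro x hx
  by_cases hxc : x ∈ Set.range c
  · obtain ⟨j, rfl⟩ := hxc
    rw [hfc]
    rcases j with j | j
    · exact absurd hx j.2
    · exact hgS j
  · exact hf0 x hxc

/-- The minimum over pairs `S, T ⊆ ∂F` with `|S| = |T|` of the order of vanishing at `λ₀` of
the minor of `Q + λ B` on rows `(F∖∂F) ∪ S` and columns `(F∖∂F) ∪ T` equals the dimension of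
the Neumann–Dirichlet kernel `{f : (Q + λ₀B)·f = 0, f|_{∂F} = 0}`. -/
theorem statement_15 {F : Type*} [Fintype F] [DecidableEq F]
    (s : Set F) [DecidablePred (· ∈ s)]
    (Q : Matrix F F ℝ) (hQsym : Q.IsSymm)
    (b : F → ℝ) (hb : ∀ x, 0 < b x) (lam₀ : ℂ)
    (P : Matrix F F (Polynomial ℂ))
    (hP : ∀ i j : F, P i j = C ((Q i j : ℝ) : ℂ)
      + X * C (((Matrix.diagonal b) i j : ℝ) : ℂ)) :
    sInf {n : ℕ∞ | ∃ (S T : Finset {x // x ∈ s}) (e : {y // y ∈ S} ≃ {y // y ∈ T}),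
        n = ordAt lam₀ (Matrix.det (Matrix.of
          fun i j : ({x // x ∉ s} ⊕ {y // y ∈ S}) =>
            P (Sum.elim Subtype.val (fun y => y.val.val) i)
              (Sum.elim Subtype.val (fun y => ((e y).val.val : F)) j)))}
      = (Module.finrank ℂ
          ↥(LinearMap.ker (Matrix.mulVecLin
              (Q.map (fun t : ℝ => (t : ℂ)) + lam₀ • (Matrix.diagonal b).map (fun t : ℝ => (t : ℂ))))
            ⊓ vanishOn s) : ℕ∞) := by
  set Bc := (Matrix.diagonal b).map (fun t : ℝ => (t : ℂ)) with hBc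
  set A := Q.map (fun t : ℝ => (t : ℂ)) + lam₀ • Bc with hA
  have hPA : ∀ {m : Type _} (r c : m → F), (Matrix.of fun i j : m => P (r i) (c j))
      = (A.submatrix r c).map C + (X - C lam₀) • (Bc.submatrix r c).map C := by
    intro m r c
    ext1 i j
    simp only [hA, hBc, hP, of_apply, Matrix.add_apply, map_apply, submatrix_apply,
      Matrix.smul_apply, smul_eq_mul, C_add, C_mul]
    ring
  apply le_antisymm
  · have hAsymm : A.IsSymm := by
      refine Matrix.IsSymm.ext fun i j => ?_
      by_cases h : i = j
      · rw [h]
      · simp [hA, hBc, h, Ne.symm h, hQsym.apply i j]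
    obtain ⟨S, hS⟩ := exists_principal_kernel_le s A hAsymm
    let c : ({x // x ∉ s} ⊕ {y // y ∈ S}) → F := Sum.elim Subtype.val (fun y => y.val.val)
    have hcinj : Function.Injective c := sumElim_val_injective s _ Subtype.val_injective
    refine sInf_le_of_le (b := ordAt lam₀ (Matrix.det (Matrix.of fun i j => P (c i) (c j))))
      ⟨S, S, Equiv.refl _, rfl⟩ (le_trans (le_of_eq ?_) (Nat.cast_le.2 (hS c rfl)))
    rw [hPA]
    obtain ⟨p, hp, hp0⟩ := pencil_det_factor (A.submatrix c c) (Bc.submatrix c c) lam₀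
    have hBsub : Bc.submatrix c c = (diagonal (b ∘ c)).map (fun t : ℝ => (t : ℂ)) := by
      rw [hBc, submatrix_map, submatrix_diagonal _ _ hcinj]
    have hpe : p.eval lam₀ ≠ 0 := by
      apply hp0
      have h1 : A.submatrix c c = (Q.submatrix c c).map (fun t : ℝ => (t : ℂ))
          + lam₀ • (diagonal (b ∘ c)).map (fun t : ℝ => (t : ℂ)) := by
        rw [← hBsub]; rfl
      rw [h1, hBsub]
      exact real_pencil_nondegenerate _ (hQsym.submatrix c) _ (fun x => hb (c x)) lam₀
    have hpne : p ≠ 0 := by rintro rfl; simp at hpe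
    have hne : (X - C lam₀) ^ Module.finrank ℂ
        (LinearMap.ker (A.submatrix c c).mulVecLin) * p ≠ 0 :=
      mul_ne_zero (pow_ne_zero _ (X_sub_C_ne_zero _)) hpne
    rw [hp, ordAt, if_neg hne, rootMultiplicity_mul hne, rootMultiplicity_X_sub_C_pow,
      rootMultiplicity_eq_zero hpe, add_zero]
  · refine le_sInf ?_
    rintro _ ⟨S, T, e, rfl⟩
    have hc : Function.Injective (Sum.elim Subtype.val (fun y => ((e y).val.val : F)) :
        ({x // x ∉ s} ⊕ {y // y ∈ S}) → F) :=
      sumElim_val_injective s (fun y => (e y).val) (Subtype.val_injective.comp e.injective)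
    rw [hPA]
    refine (Nat.cast_le.2 (vanishing_kernel_le s A
      (Sum.elim Subtype.val (fun y : {y // y ∈ S} => (y.val.val : F))) _ hc
      fun x hx => ⟨Sum.inl ⟨x, hx⟩, rfl⟩)).trans ?_
    obtain ⟨p, hp, -⟩ := pencil_det_factor (A.submatrix
      (Sum.elim Subtype.val (fun y => y.val.val) : ({x // x ∉ s} ⊕ {y // y ∈ S}) → F)
      (Sum.elim Subtype.val (fun y => ((e y).val.val : F)))) (Bc.submatrix
      (Sum.elim Subtype.val (fun y => y.val.val))
      (Sum.elim Subtype.val (fun y => ((e y).val.val : F)))) lam₀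
    rw [hp, ordAt]
    split_ifs with h0
    · exact le_top
    · exact Nat.cast_le.2 ((le_rootMultiplicity_iff h0).2 (dvd_mul_right _ _))
end
end
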